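/- arXiv:2406.07735 — 2 statements merged into one kernel-verified Lean document; each statement's English description precedes it below -/
import Mathlib

section
/- Let W be a finite type, and let p : W → ℝ be a probability distribution (p(w) ≥ 0 for all w and Σ_{w∈W} p(w) = 1). Let S ⊆ W be a nonempty subset such that p(w) > 0 for every w ∈ S and p(w) ≥ p(w') for every w ∈ S and w' ∉ S (S consists of the top-probability tokens). Let g = Σ_{w∈S} p(w), and define the renormalized (ideal) distribution p* : W → ℝ by p*(w) = p(w)/g for w ∈ S and p*(w) = 0 otherwise. Then the entropy gap satisfies H(p) − H(p*) ≥ −log g, where H(q) = −Σ_{w∈W} q(w) log q(w) with the convention 0 · log 0 = 0. -/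
/-- Entropy (natural log), with the convention `0 * log 0 = 0`
(which holds automatically since `Real.log 0 = 0`). -/
noncomputable def entropy {W : Type*} [Fintype W] (q : W → ℝ) : ℝ :=
  -∑ w, q w * Real.log (q w)

/-!
Write `g` for the mass of `S`. Grouping the terms of the entropy gives
`H(p) = g (H(p*) - log g) + ∑ w ∉ S, -p(w) log p(w)`, and `g exp (-H(p*))` is the geometric mean
of `p` over `S` with weights `p*`. If `p` is at most this mean off `S`, which holds as soon as it is
at most every value of `p` on `S`, then `-log p(w) ≥ H(p*) - log g` for `w ∉ S`, and summing
with total weight one gives `H(p) ≥ H(p*) - log g`.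
-/

open Real

section Pointwise

variable {x t : ℝ}

theorem negMulLog_le_neg_mul_log (ht : 0 < t) (htx : t ≤ x) : negMulLog x ≤ -x * log t :=
  mul_le_mul_of_nonpos_left (log_le_log ht htx) (neg_nonpos.2 (ht.le.trans htx))

theorem neg_mul_log_le_negMulLog (hx : 0 ≤ x) (hxt : x ≤ t) : -x * log t ≤ negMulLog x := by
  rcases hx.eq_or_lt with rfl | hx
  · simp
  · exact mul_le_mul_of_nonpos_left (log_le_log hx hxt) (neg_nonpos.2 hx.le)

end Pointwise

theorem entropy_eq_sum_negMulLog {W : Type*} [Fintype W] (q : W → ℝ) :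
    entropy q = ∑ w, negMulLog (q w) := by
  simp only [entropy, negMulLog_eq_neg, Finset.sum_neg_distrib]

section Renormalize

variable {W : Type*} [DecidableEq W]

/-- The renormalized restriction of the weights `p` to `S`, that is, the distribution `p*` obtained
by truncating `p` to `S`. It is identically zero when `S` has mass zero. -/
noncomputable def renormalize (S : Finset W) (p : W → ℝ) (w : W) : ℝ :=
  if w ∈ S then p w / ∑ v ∈ S, p v else 0

variable [Fintype W] {S : Finset W} {p : W → ℝ}

theorem entropy_renormalize (hg : ∑ w ∈ S, p w ≠ 0) :
    entropy (renormalize S p) =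
      (∑ w ∈ S, negMulLog (p w)) / (∑ w ∈ S, p w) + log (∑ w ∈ S, p w) := by
  set g := ∑ w ∈ S, p w with hg_def
  calc entropy (renormalize S p)
    _ = ∑ w ∈ S, negMulLog (p w * g⁻¹) := by
      simp only [entropy_eq_sum_negMulLog, renormalize, apply_ite negMulLog, negMulLog_zero,
        Finset.sum_ite_mem, Finset.univ_inter, div_eq_mul_inv, hg_def]
    _ = g⁻¹ * ∑ w ∈ S, negMulLog (p w) + g * negMulLog g⁻¹ := by
      simp only [negMulLog_mul, Finset.sum_add_distrib, ← Finset.mul_sum, ← Finset.sum_mul, hg_def]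
    _ = (∑ w ∈ S, negMulLog (p w)) / g + log g := by
      rw [negMulLog, log_inv]
      field_simp

theorem entropy_eq_mass_mul_add_sum_compl (hg : ∑ w ∈ S, p w ≠ 0) :
    entropy p = (∑ w ∈ S, p w) * (entropy (renormalize S p) - log (∑ w ∈ S, p w)) +
      ∑ w ∈ Sᶜ, negMulLog (p w) := by
  rw [entropy_renormalize hg, add_sub_cancel_right, mul_div_cancel₀ _ hg,
    Finset.sum_add_sum_compl, entropy_eq_sum_negMulLog]

theorem le_mass_mul_exp_neg_entropy_renormalize {t : ℝ} (hg : 0 < ∑ w ∈ S, p w)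
    (ht : ∀ w ∈ S, t ≤ p w) : t ≤ (∑ w ∈ S, p w) * exp (-entropy (renormalize S p)) := by
  rcases le_or_gt t 0 with ht₀ | ht₀
  · exact ht₀.trans (by positivity)
  have hsum : ∑ w ∈ S, negMulLog (p w) ≤ -log t * ∑ w ∈ S, p w := by
    rw [Finset.mul_sum]
    refine Finset.sum_le_sum fun w hw => ?_
    linarith [negMulLog_le_neg_mul_log ht₀ (ht w hw)]
  have hentropy : entropy (renormalize S p) ≤ -log t + log (∑ w ∈ S, p w) := by
    rw [entropy_renormalize hg.ne']
    gcongr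
    exact (div_le_iff₀ hg).2 hsum
  rw [← log_le_log_iff ht₀ (by positivity), log_mul hg.ne' (exp_ne_zero _), log_exp]
  linarith

theorem entropy_gap_ge_neg_log_general (hp : ∀ w, 0 ≤ p w) (hg : 0 < ∑ w ∈ S, p w)
    (hmean : ∀ w ∉ S, p w ≤ (∑ v ∈ S, p v) * exp (-entropy (renormalize S p))) :
    entropy p - (∑ w, p w) * entropy (renormalize S p) ≥ -(∑ w, p w) * log (∑ w ∈ S, p w) := by
  set g := ∑ w ∈ S, p w
  set h := entropy (renormalize S p)
  have hlog : log (g * exp (-h)) = log g - h := by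
    rw [log_mul hg.ne' (exp_ne_zero _), log_exp, sub_eq_add_neg]
  have htail : (∑ w ∈ Sᶜ, p w) * (h - log g) ≤ ∑ w ∈ Sᶜ, negMulLog (p w) := by
    rw [Finset.sum_mul]
    refine Finset.sum_le_sum fun w hw => ?_
    have hterm := neg_mul_log_le_negMulLog (hp w) (hmean w (Finset.mem_compl.1 hw))
    rw [hlog] at hterm
    linarith
  have hgap : (∑ w, p w) * (h - log g) ≤ entropy p := by
    rw [entropy_eq_mass_mul_add_sum_compl hg.ne', ← Finset.sum_add_sum_compl S p, add_mul]
    gcongr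
  linarith

end Renormalize

/-- Core inequality of Theorem 1 (REAL sampling): the entropy gap between the
full distribution `p` and the renormalized top-token distribution `p*` is at
least `-log g`, where `g` is the total probability of the top-token set `S`. -/
theorem entropy_gap_ge_neg_log
    {W : Type*} [Fintype W] [DecidableEq W] (p : W → ℝ)
    (hp : ∀ w, 0 ≤ p w) (hsum : ∑ w, p w = 1)
    (S : Finset W) (hS : S.Nonempty)
    (hpos : ∀ w ∈ S, 0 < p w)
    (htop : ∀ w ∈ S, ∀ w' ∉ S, p w' ≤ p w)
    (g : ℝ) (hg : g = ∑ w ∈ S, p w)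
    (pStar : W → ℝ) (hpStar : ∀ w, pStar w = if w ∈ S then p w / g else 0) :
    entropy p - entropy pStar ≥ -Real.log g := by
  obtain rfl : pStar = renormalize S p := funext fun w => by rw [hpStar, hg, renormalize]
  simpa [hsum, hg] using entropy_gap_ge_neg_log_general hp (Finset.sum_pos hpos hS)
    fun w' hw' => le_mass_mul_exp_neg_entropy_renormalize (Finset.sum_pos hpos hS)
      fun w hw => htop w hw w' hw'
end

section
/- Let W be a finite type, p : W → ℝ a probability distribution (p(w) ≥ 0, Σ_{w∈W} p(w) = 1), and S ⊆ W a nonempty subset with p(w) > 0 for every w ∈ S and p(w) ≥ p(w') for every w ∈ S, w' ∉ S. Let g = Σ_{w∈S} p(w), A = Σ_{w∈S} p(w) log(1/p(w)), and B = Σ_{w∉S} p(w) log(1/p(w)) (with 0 · log(1/0) = 0). Then B ≥ ((1 − g)/g) · A. -/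
/-!
Since `x ↦ log (1 / x)` is antitone on the positive reals, each pair of a head token and a tail
token satisfies the inequality in cross-multiplied form; summing over all pairs gives the claim.
-/

theorem mul_mul_log_one_div_le_of_le {x y : ℝ} (hy : 0 ≤ y) (hyx : y ≤ x) :
    y * (x * Real.log (1 / x)) ≤ x * (y * Real.log (1 / y)) := by
  obtain rfl | hy_pos := hy.eq_or_lt
  · simp
  · have hx_pos : 0 < x := hy_pos.trans_le hyx
    have log_le : Real.log (1 / x) ≤ Real.log (1 / y) :=
      Real.log_le_log (one_div_pos.mpr hx_pos) (one_div_le_one_div_of_le hy_pos hyx)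
    rw [mul_left_comm]
    gcongr

theorem tail_entropy_dominates_general {W : Type*} {p : W → ℝ} {S T : Finset W}
    (hp : ∀ w ∈ T, 0 ≤ p w) (htop : ∀ w ∈ S, ∀ w' ∈ T, p w' ≤ p w) :
    (∑ w ∈ T, p w) * ∑ w ∈ S, p w * Real.log (1 / p w) ≤
      (∑ w ∈ S, p w) * ∑ w ∈ T, p w * Real.log (1 / p w) := by
  rw [Finset.sum_mul_sum, Finset.sum_mul_sum, Finset.sum_comm]
  exact Finset.sum_le_sum fun w hw ↦ Finset.sum_le_sum fun w' hw' ↦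
    mul_mul_log_one_div_le_of_le (hp w' hw') (htop w hw w' hw')

/-- Key intermediate inequality for Theorem 1: with `S` the top-token set of
total mass `g`, the tail partial-entropy sum `B` dominates `((1-g)/g)` times
the head partial-entropy sum `A`.  The convention `0 * log (1/0) = 0` holds
automatically since `Real.log (1/0) = Real.log 0 = 0`. -/
theorem tail_entropy_dominates
    {W : Type*} [Fintype W] [DecidableEq W] (p : W → ℝ)
    (hp : ∀ w, 0 ≤ p w) (hsum : ∑ w, p w = 1)
    (S : Finset W) (hS : S.Nonempty)
    (hpos : ∀ w ∈ S, 0 < p w)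
    (htop : ∀ w ∈ S, ∀ w' ∉ S, p w' ≤ p w)
    (g : ℝ) (hg : g = ∑ w ∈ S, p w)
    (A : ℝ) (hA : A = ∑ w ∈ S, p w * Real.log (1 / p w))
    (B : ℝ) (hB : B = ∑ w ∈ Sᶜ, p w * Real.log (1 / p w)) :
    B ≥ ((1 - g) / g) * A := by
  have tail_mass : 1 - g = ∑ w ∈ Sᶜ, p w := by
    rw [hg, ← hsum, ← Finset.sum_add_sum_compl S p, add_sub_cancel_left]
  have head_mass_pos : 0 < g := hg ▸ Finset.sum_pos hpos hS
  rw [ge_iff_le, div_mul_eq_mul_div, div_le_iff₀' head_mass_pos, tail_mass, hg, hA, hB]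
  exact tail_entropy_dominates_general (fun w _ ↦ hp w)
    fun w hw w' hw' ↦ htop w hw w' (Finset.mem_compl.mp hw')
end
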